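/- Let F be an infinite field, let n ≥ 2 be an integer, and let w₁, w₂, w₃, w₄ be nontrivial words. Then every element of SL_n(F) that is not in the center Z(SL_n(F)) is a product g₁g₂g₃g₄ with g_i ∈ w_i(SL_n(F)) for i = 1, 2, 3, 4. -/

import Mathlib

/-- The set of `w`-values in the group `G`: the image of the word map `w : G^d → G`. -/
def wordValues {d : ℕ} (w : FreeGroup (Fin d)) (G : Type*) [Group G] : Set G :=
  Set.range fun g : Fin d → G => FreeGroup.lift g w

/-!
Two ideas are combined. First, for nontrivial words `w`, `w'` some diagonal matrix with *distinct*
entries lies in `w(SL_n) w'(SL_n)`. For `n = 2`, a ping-pong argument embeds a free group into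
`SL₂(F[X])`, and specializing `X` produces noncentral values of `w` and `w'` in `SL₂(F)`; a product
of two noncentral classes of `SL₂(F)` contains every `diag(a, a⁻¹)` with `a ≠ a⁻¹`. In general one
places such `2 × 2` blocks along the diagonal, together with a block `1` if `n` is odd. Word values
are stable under conjugation by `GL_n(F)`, so the whole conjugacy class of the diagonal matrix lies
in `w(SL_n) w'(SL_n)`.

Second, by Sourour's factorization theorem, a nonscalar matrix of determinant `1` is a product of
two matrices with prescribed eigenvalues, here the entries of the diagonal matrices attached to
`(w₁, w₂)` and `(w₃, w₄)`. This is proved by induction on the size: conjugate the matrix so that its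
corner is the product of the first two eigenvalues and its Schur complement is again nonscalar, and
factor the Schur complement.
-/

open Matrix Polynomial
open scoped Pointwise

section Conjugacy

variable {M N : Type*} [Monoid M] [Monoid N] {a b x y : M}

lemma exists_mulEquiv_of_isConj (h : IsConj x y) :
    ∃ φ : M ≃* M, φ x = y ∧ ∀ z, IsConj z (φ z) := by
  obtain ⟨u, hu⟩ := h
  refine ⟨MulDistribMulAction.toMulEquiv M (ConjAct.toConjAct u), ?_, fun z ↦ ⟨u, ?_⟩⟩
  · simp [ConjAct.units_smul_def, hu.eq]
  · simp [SemiconjBy, ConjAct.units_smul_def]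

lemma mem_conjugatesOf_mul_of_isConj (h : IsConj x y)
    (hx : x ∈ conjugatesOf a * conjugatesOf b) : y ∈ conjugatesOf a * conjugatesOf b := by
  obtain ⟨φ, rfl, hφ⟩ := exists_mulEquiv_of_isConj h
  obtain ⟨c, hc, d, hd, rfl⟩ := Set.mem_mul.1 hx
  rw [map_mul]
  exact Set.mul_mem_mul (IsConj.trans hc (hφ c)) (IsConj.trans hd (hφ d))

lemma map_mem_conjugatesOf_mul (f : M →* N) (hx : x ∈ conjugatesOf a * conjugatesOf b) :
    f x ∈ conjugatesOf (f a) * conjugatesOf (f b) := by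
  obtain ⟨c, hc, d, hd, rfl⟩ := Set.mem_mul.1 hx
  rw [map_mul]
  exact Set.mul_mem_mul (f.map_isConj hc) (f.map_isConj hd)

lemma det_eq_of_isConj {n R : Type*} [Fintype n] [DecidableEq n] [CommRing R]
    {A B : Matrix n n R} (h : IsConj A B) : A.det = B.det :=
  isConj_iff_eq.1 (detMonoidHom.map_isConj h)

end Conjugacy

section WordValues

variable {d : ℕ} {w : FreeGroup (Fin d)} {G H : Type*} [Group G] [Group H]

lemma mem_wordValues_iff {g : G} :
    g ∈ wordValues w G ↔ ∃ φ : FreeGroup (Fin d) →* G, φ w = g :=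
  FreeGroup.lift.exists_congr_left.trans (by simp)

lemma map_mem_wordValues (f : G →* H) {g : G} (hg : g ∈ wordValues w G) :
    f g ∈ wordValues w H := by
  obtain ⟨φ, rfl⟩ := mem_wordValues_iff.1 hg
  exact mem_wordValues_iff.2 ⟨f.comp φ, rfl⟩

lemma prodMk_mem_wordValues {g : G} {h : H} (hg : g ∈ wordValues w G) (hh : h ∈ wordValues w H) :
    (g, h) ∈ wordValues w (G × H) := by
  obtain ⟨φ, rfl⟩ := mem_wordValues_iff.1 hg
  obtain ⟨ψ, rfl⟩ := mem_wordValues_iff.1 hh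
  exact mem_wordValues_iff.2 ⟨φ.prod ψ, rfl⟩

lemma one_mem_wordValues : 1 ∈ wordValues w G :=
  mem_wordValues_iff.2 ⟨1, rfl⟩

end WordValues

section WordMatrices

/-- The matrices of the `w`-values in `SL_n(R)`; as a set of matrices it can be compared with
conjugacy classes taken in the monoid of all matrices, i.e. under `GL_n(R)`. -/
def wordMatrices {d : ℕ} (w : FreeGroup (Fin d)) (n R : Type*) [Fintype n] [DecidableEq n]
    [CommRing R] : Set (Matrix n n R) :=
  (↑) '' wordValues w (SpecialLinearGroup n R)

variable {d d' : ℕ} {w : FreeGroup (Fin d)} {w' : FreeGroup (Fin d')}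
  {m n R : Type*} [Fintype m] [DecidableEq m] [Fintype n] [DecidableEq n] [CommRing R]

lemma det_eq_one_of_mem_wordMatrices {A : Matrix n n R} (hA : A ∈ wordMatrices w n R) :
    A.det = 1 := by
  obtain ⟨g, -, rfl⟩ := hA
  exact g.2

lemma map_mem_wordMatrices (f : Matrix m m R →* Matrix n n R) (hf : ∀ A, (f A).det = A.det)
    {A : Matrix m m R} (hA : A ∈ wordMatrices w m R) : f A ∈ wordMatrices w n R := by
  obtain ⟨g, hg, rfl⟩ := hA
  let φ : SpecialLinearGroup m R →* SpecialLinearGroup n R :=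
    MonoidHom.mk' (fun g ↦ ⟨f g.1, by rw [hf, g.2]⟩) fun g h ↦ Subtype.ext (map_mul f g.1 h.1)
  exact ⟨φ g, map_mem_wordValues φ hg, rfl⟩

lemma mem_wordMatrices_of_isConj {A B : Matrix n n R} (h : IsConj A B)
    (hA : A ∈ wordMatrices w n R) : B ∈ wordMatrices w n R := by
  obtain ⟨φ, rfl, hφ⟩ := exists_mulEquiv_of_isConj h
  exact map_mem_wordMatrices φ.toMonoidHom (fun C ↦ (det_eq_of_isConj (hφ C)).symm) hA

lemma mem_wordMatrices_mul_of_isConj {A B : Matrix n n R} (h : IsConj A B)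
    (hA : A ∈ wordMatrices w n R * wordMatrices w' n R) :
    B ∈ wordMatrices w n R * wordMatrices w' n R := by
  obtain ⟨φ, rfl, hφ⟩ := exists_mulEquiv_of_isConj h
  obtain ⟨C, hC, D, hD, rfl⟩ := Set.mem_mul.1 hA
  rw [map_mul]
  exact Set.mul_mem_mul (mem_wordMatrices_of_isConj (hφ C) hC)
    (mem_wordMatrices_of_isConj (hφ D) hD)

lemma reindex_mem_wordMatrices_mul (e : m ≃ n) {A : Matrix m m R}
    (hA : A ∈ wordMatrices w m R * wordMatrices w' m R) :
    reindex e e A ∈ wordMatrices w n R * wordMatrices w' n R := by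
  obtain ⟨B, hB, C, hC, rfl⟩ := Set.mem_mul.1 hA
  have h {k : ℕ} {v : FreeGroup (Fin k)} {D : Matrix m m R} (hD : D ∈ wordMatrices v m R) :
      reindexAlgEquiv R R e D ∈ wordMatrices v n R :=
    map_mem_wordMatrices (reindexAlgEquiv R R e : Matrix m m R →* Matrix n n R)
      (det_reindexAlgEquiv R R e) hD
  have := Set.mul_mem_mul (h hB) (h hC)
  rwa [← map_mul] at this

lemma fromBlocks_mem_wordMatrices {A : Matrix m m R} {D : Matrix n n R}
    (hA : A ∈ wordMatrices w m R) (hD : D ∈ wordMatrices w n R) :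
    fromBlocks A 0 0 D ∈ wordMatrices w (m ⊕ n) R := by
  obtain ⟨g, hg, rfl⟩ := hA
  obtain ⟨h, hh, rfl⟩ := hD
  let φ : SpecialLinearGroup m R × SpecialLinearGroup n R →* SpecialLinearGroup (m ⊕ n) R :=
    MonoidHom.mk' (fun p ↦ ⟨fromBlocks p.1 0 0 p.2, by simp⟩) fun p q ↦
      Subtype.ext ((by simp [fromBlocks_multiply] :
        fromBlocks (p.1 * q.1).1 0 0 (p.2 * q.2).1 =
          fromBlocks p.1.1 0 0 p.2.1 * fromBlocks q.1.1 0 0 q.2.1))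
  exact ⟨φ (g, h), map_mem_wordValues φ (prodMk_mem_wordValues hg hh), rfl⟩

lemma fromBlocks_mem_wordMatrices_mul {A : Matrix m m R} {D : Matrix n n R}
    (hA : A ∈ wordMatrices w m R * wordMatrices w' m R)
    (hD : D ∈ wordMatrices w n R * wordMatrices w' n R) :
    fromBlocks A 0 0 D ∈ wordMatrices w (m ⊕ n) R * wordMatrices w' (m ⊕ n) R := by
  obtain ⟨B, hB, C, hC, rfl⟩ := Set.mem_mul.1 hA
  obtain ⟨E, hE, F, hF, rfl⟩ := Set.mem_mul.1 hD
  rw [show fromBlocks (B * C) 0 0 (E * F) = fromBlocks B 0 0 E * fromBlocks C 0 0 F by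
    simp [fromBlocks_multiply]]
  exact Set.mul_mem_mul (fromBlocks_mem_wordMatrices hB hE) (fromBlocks_mem_wordMatrices hC hF)

lemma one_mem_wordMatrices_mul : 1 ∈ wordMatrices w n R * wordMatrices w' n R :=
  Set.mem_mul.2 ⟨1, ⟨1, one_mem_wordValues, rfl⟩, 1, ⟨1, one_mem_wordValues, rfl⟩, one_mul 1⟩

end WordMatrices

section Center

variable {n : Type*} [Fintype n]

lemma notMem_center_of_apply_ne_zero {R : Type*} [CommSemiring R]
    {A : Matrix n n R} {i j : n} (hij : i ≠ j) (h : A i j ≠ 0) :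
    A ∉ Set.center (Matrix n n R) := by
  classical
  rw [center_eq_range]
  rintro ⟨c, rfl⟩
  exact h (diagonal_apply_ne _ hij)

lemma exists_linearIndependent_mulVec {F : Type*} [Field F] {A : Matrix n n F}
    (hA : A ∉ Set.center (Matrix n n F)) : ∃ v, LinearIndependent F ![v, A *ᵥ v] := by
  classical
  by_contra! h
  obtain ⟨a, ha⟩ := LinearMap.exists_eq_smul_id_of_forall_notLinearIndependent
    (f := Matrix.toLin' A) h
  refine hA ?_
  rw [center_eq_range]
  refine ⟨a, ?_⟩
  rw [← LinearMap.toMatrix'_toLin' A, ha]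
  exact (LinearMap.toMatrix'_algebraMap a).symm

variable [DecidableEq n]

lemma notMem_center_coe {R : Type*} [CommRing R]
    {g : SpecialLinearGroup n R} (hg : g ∉ Subgroup.center (SpecialLinearGroup n R)) :
    g.1 ∉ Set.center (Matrix n n R) := fun h ↦
  hg (Subgroup.mem_center_iff.2 fun x ↦ Subtype.ext (Semigroup.mem_center_iff.1 h x.1))

lemma pow_card_eq_one_of_mem_center {R : Type*} [CommRing R]
    {g : SpecialLinearGroup n R} (hg : g.1 ∈ Set.center (Matrix n n R)) :
    g ^ Fintype.card n = 1 := by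
  rw [center_eq_range] at hg
  obtain ⟨c, hc⟩ := hg
  have hdet : c ^ Fintype.card n = 1 := by
    rw [← g.2, ← hc, scalar_apply, det_diagonal, Finset.prod_const, Finset.card_univ]
  have hpow : g.1 ^ Fintype.card n = 1 := by rw [← hc, ← map_pow, hdet, map_one]
  exact Subtype.ext ((Matrix.SpecialLinearGroup.coe_pow g _).trans hpow)

end Center

section PingPong

universe v

lemma injective_lift_mul_of_pingPong {ι G : Type v} [Nontrivial ι] [Group G] {α : Type*}
    [MulAction G α] {A : Set α} (hA : A.Nonempty) (u l : ι → G) (hu : ∀ i, u i • A ⊆ Aᶜ)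
    (huu : ∀ i j, i ≠ j → ((u j)⁻¹ * u i) • A ⊆ Aᶜ) (hl : ∀ i, (l i)⁻¹ • Aᶜ ⊆ A)
    (hll : ∀ i j, i ≠ j → (l j * (l i)⁻¹) • Aᶜ ⊆ A) :
    Function.Injective (FreeGroup.lift fun i ↦ u i * l i) := by
  refine FreeGroup.injective_lift_of_ping_pong (fun i ↦ u i * l i) (fun i ↦ u i • A)
    (fun i ↦ (l i)⁻¹ • Aᶜ) (fun i ↦ hA.smul_set) ?_ ?_ ?_ ?_ ?_
  · intro i j hij
    rw [Function.onFun, ← Set.disjoint_smul_set (a := (u j)⁻¹), smul_smul, inv_smul_smul]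
    exact Set.disjoint_left.2 (huu i j hij)
  · intro i j hij
    rw [Function.onFun, ← Set.disjoint_smul_set (a := l j), smul_smul, smul_inv_smul]
    exact Set.disjoint_left.2 fun x hx hxA ↦ hxA (hll i j hij hx)
  · exact fun i j ↦ Set.disjoint_left.2 fun x hx hx' ↦ hu i hx (hl j hx')
  · intro i
    simp [← Set.smul_set_compl, smul_smul]
  · intro i
    simp [← Set.smul_set_compl, smul_smul]

lemma degree_lt_degree_add_mul {R : Type*} [Semiring R] [NoZeroDivisors R] {f a b : R[X]}
    (hf : 0 < f.degree) (hb : b ≠ 0) (hab : a.degree ≤ b.degree) :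
    b.degree < (a + f * b).degree := by
  have hfb : b.degree < (f * b).degree := by
    rw [degree_mul]
    simpa [add_comm] using WithBot.add_lt_add_left (degree_ne_bot.2 hb) hf
  rwa [degree_add_eq_right_of_degree_lt (hab.trans_lt hfb)]

variable {F : Type*} [Field F]

/-- The region of `SL₂(F[X])` used for ping-pong: upper transvections of positive degree map it into
its complement, lower ones map the complement into it. -/
def lowColumn (F : Type*) [Field F] : Set (SpecialLinearGroup (Fin 2) F[X]) :=
  {g | (g 0 0).degree ≤ (g 1 0).degree}

lemma transvection_smul_lowColumn_subset {f : F[X]} (hf : 0 < f.degree) :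
    SpecialLinearGroup.transvection (zero_ne_one' (Fin 2)) f • lowColumn F ⊆ (lowColumn F)ᶜ := by
  rintro _ ⟨g, hg : (g 0 0).degree ≤ (g 1 0).degree, rfl⟩
  have hg0 : g 1 0 ≠ 0 := by
    intro h
    have h00 : g 0 0 = 0 := by simpa [h] using hg
    have := g.isCoprime_col 0
    rw [h, h00] at this
    exact not_isCoprime_zero_zero this
  simpa [lowColumn, SpecialLinearGroup.transvection_coe, Matrix.add_mul]
    using degree_lt_degree_add_mul hf hg0 hg

lemma transvection_smul_compl_lowColumn_subset {f : F[X]} (hf : 0 < f.degree) :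
    SpecialLinearGroup.transvection (one_ne_zero' (Fin 2)) f • (lowColumn F)ᶜ ⊆ lowColumn F := by
  rintro _ ⟨g, hg, rfl⟩
  have hg' : (g 1 0).degree < (g 0 0).degree := not_le.1 hg
  simpa [lowColumn, SpecialLinearGroup.transvection_coe, Matrix.add_mul]
    using (degree_lt_degree_add_mul hf (ne_zero_of_degree_gt hg') hg'.le).le

lemma injective_lift_transvection_mul {ι : Type v} {F : Type v} [Nontrivial ι] [Field F]
    {f : ι → F[X]} (hf : ∀ i, 0 < (f i).degree) (hff : ∀ i j, i ≠ j → 0 < (f i - f j).degree) :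
    Function.Injective (FreeGroup.lift (β := SpecialLinearGroup (Fin 2) F[X]) fun i ↦
      SpecialLinearGroup.transvection (zero_ne_one' (Fin 2)) (f i) *
        SpecialLinearGroup.transvection (one_ne_zero' (Fin 2)) (f i)) := by
  have hnonempty : (lowColumn F).Nonempty :=
    ⟨SpecialLinearGroup.transvection (one_ne_zero' (Fin 2)) 1, by
      simp [lowColumn, SpecialLinearGroup.transvection_coe]⟩
  refine injective_lift_mul_of_pingPong hnonempty _ _
    (fun i ↦ transvection_smul_lowColumn_subset (hf i)) (fun i j hij ↦ ?_) (fun i ↦ ?_)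
    (fun i j hij ↦ ?_)
  · rw [SpecialLinearGroup.transvection_inv, ← SpecialLinearGroup.transvection_add]
    exact transvection_smul_lowColumn_subset (by simpa [neg_add_eq_sub] using hff i j hij)
  · rw [SpecialLinearGroup.transvection_inv]
    exact transvection_smul_compl_lowColumn_subset (by simpa using hf i)
  · rw [SpecialLinearGroup.transvection_inv, ← SpecialLinearGroup.transvection_add]
    exact transvection_smul_compl_lowColumn_subset
      (by simpa [← sub_eq_add_neg] using hff j i hij.symm)

lemma exists_injective_freeGroup_hom [Infinite F] (d : ℕ) :
    ∃ φ : FreeGroup (Fin d) →* SpecialLinearGroup (Fin 2) F[X], Function.Injective φ := by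
  -- Degree two, so that the differences `(a - b) X` are still nonconstant.
  have hdeg (a : F) : (X ^ 2 + C a * X : F[X]).degree = 2 := by compute_degree!
  have hinj := injective_lift_transvection_mul (f := fun a : F ↦ X ^ 2 + C a * X)
    (fun a ↦ by simp [hdeg]) fun a b hab ↦ by
      rw [add_sub_add_left_eq_sub, ← sub_mul, ← C_sub, degree_C_mul_X (sub_ne_zero.2 hab)]
      exact one_pos
  let e : Fin d ↪ F := (Fin.valEmbedding).trans (Infinite.natEmbedding F)
  exact ⟨(FreeGroup.lift _).comp (FreeGroup.map e), hinj.comp (FreeGroup.map_injective e.injective)⟩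

lemma eq_one_of_forall_map_eval_eq_one {n R : Type*} [Fintype n] [DecidableEq n] [CommRing R]
    [IsDomain R] [Infinite R] {g : SpecialLinearGroup n R[X]}
    (h : ∀ t, SpecialLinearGroup.map (evalRingHom t) g = 1) : g = 1 := by
  refine Subtype.ext <| Matrix.ext fun i j ↦ Polynomial.funext fun t ↦ ?_
  have hij : (SpecialLinearGroup.map (evalRingHom t) g) i j =
      (SpecialLinearGroup.map (evalRingHom t) (1 : SpecialLinearGroup n R[X])) i j := by
    rw [h, map_one]
  exact hij

lemma exists_mem_wordMatrices_notMem_center [Infinite F] {d : ℕ} {w : FreeGroup (Fin d)}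
    (hw : w ≠ 1) :
    ∃ A ∈ wordMatrices w (Fin 2) F, A ∉ Set.center (Matrix (Fin 2) (Fin 2) F) := by
  obtain ⟨φ, hφ⟩ := exists_injective_freeGroup_hom (F := F) d
  have hφw : φ w ^ 2 ≠ 1 := by
    rw [← map_pow, map_ne_one_iff φ hφ]
    exact fun h ↦ hw ((pow_eq_one_iff_left two_ne_zero).1 h)
  obtain ⟨t, ht⟩ := not_forall.1 (mt eq_one_of_forall_map_eval_eq_one hφw)
  refine ⟨_, ⟨_, map_mem_wordValues (SpecialLinearGroup.map (evalRingHom t))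
    (mem_wordValues_iff.2 ⟨φ, rfl⟩), rfl⟩, fun hc ↦ ht ?_⟩
  rw [map_pow]
  exact pow_card_eq_one_of_mem_center hc

end PingPong

section TwoByTwo

variable {F : Type*} [Field F]

lemma isConj_companion {A : Matrix (Fin 2) (Fin 2) F}
    (hA : A ∉ Set.center (Matrix (Fin 2) (Fin 2) F)) : IsConj !![0, -A.det; 1, A.trace] A := by
  obtain ⟨v, hv⟩ := exists_linearIndependent_mulVec hA
  let P : Matrix (Fin 2) (Fin 2) F := (of ![v, A *ᵥ v])ᵀ
  have hP : IsUnit P := linearIndependent_cols_iff_isUnit.1 hv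
  refine ⟨hP.unit, ?_⟩
  change P * _ = A * P
  rw [det_fin_two, trace_fin_two]
  ext i j
  fin_cases i <;> fin_cases j <;> simp [P, Matrix.mul_apply] <;> ring

lemma isConj_of_trace_eq_of_det_eq {A B : Matrix (Fin 2) (Fin 2) F}
    (hA : A ∉ Set.center (Matrix (Fin 2) (Fin 2) F))
    (hB : B ∉ Set.center (Matrix (Fin 2) (Fin 2) F))
    (htr : A.trace = B.trace) (hdet : A.det = B.det) : IsConj A B := by
  have h := isConj_companion hA
  rw [htr, hdet] at h
  exact h.symm.trans (isConj_companion hB)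

lemma diagonal_mem_conjugatesOf_mul {A B : Matrix (Fin 2) (Fin 2) F}
    (hA : A ∉ Set.center (Matrix (Fin 2) (Fin 2) F))
    (hB : B ∉ Set.center (Matrix (Fin 2) (Fin 2) F)) (hB0 : B.det ≠ 0) {a b : F} (hab : a ≠ b)
    (ha : a ≠ 0) (hdet : A.det * B.det = a * b) :
    diagonal ![a, b] ∈ conjugatesOf A * conjugatesOf B := by
  -- `X * Y = diagonal ![a, b]`, `Y` has the trace and determinant of `B` for every `p`, and `X`
  -- has the determinant of `A`; the value of `p` is the one that adjusts the trace of `X`.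
  let p := (A.trace * B.det - b * B.trace) / (a - b)
  let q := B.det - p * (B.trace - p)
  let X := B.det⁻¹ • !![a * p, a; -(b * q), b * (B.trace - p)]
  let Y := !![B.trace - p, -1; q, p]
  have hp : p * (a - b) = A.trace * B.det - b * B.trace := div_mul_cancel₀ _ (sub_ne_zero.2 hab)
  have hX : X ∉ Set.center (Matrix (Fin 2) (Fin 2) F) :=
    notMem_center_of_apply_ne_zero zero_ne_one (by simp [X, ha, hB0])
  have hY : Y ∉ Set.center (Matrix (Fin 2) (Fin 2) F) :=
    notMem_center_of_apply_ne_zero zero_ne_one (by simp [Y])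
  have htrX : A.trace = X.trace := by
    simp only [X, trace_smul, trace_fin_two_of, smul_eq_mul]
    rw [eq_inv_mul_iff_mul_eq₀ hB0]
    linear_combination -hp
  have hdetX : A.det = X.det := by
    simp only [X, q, det_smul, Fintype.card_fin, det_fin_two_of, inv_pow]
    rw [eq_inv_mul_iff_mul_eq₀ (pow_ne_zero 2 hB0)]
    linear_combination B.det * hdet
  have htrY : B.trace = Y.trace := by simp [Y, trace_fin_two]
  have hdetY : B.det = Y.det := by simp [Y, q, det_fin_two_of]; ring
  refine Set.mem_mul.2 ⟨X, isConj_of_trace_eq_of_det_eq hA hX htrX hdetX, Y,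
    isConj_of_trace_eq_of_det_eq hB hY htrY hdetY, ?_⟩
  ext i j
  fin_cases i <;> fin_cases j <;> simp [X, Y, Matrix.mul_apply] <;> field_simp <;> ring

end TwoByTwo

section RegularDiagonal

variable {F : Type*} [Field F] [Infinite F] {d d' : ℕ} {w : FreeGroup (Fin d)}
  {w' : FreeGroup (Fin d')}

lemma diagonal_inv_mem_wordMatrices_mul (hw : w ≠ 1) (hw' : w' ≠ 1) {a : F} (ha : a ≠ a⁻¹) :
    diagonal ![a, a⁻¹] ∈ wordMatrices w (Fin 2) F * wordMatrices w' (Fin 2) F := by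
  obtain ⟨A, hA, hAc⟩ := exists_mem_wordMatrices_notMem_center (F := F) hw
  obtain ⟨B, hB, hBc⟩ := exists_mem_wordMatrices_notMem_center (F := F) hw'
  have ha0 : a ≠ 0 := by
    rintro rfl
    exact ha inv_zero.symm
  have hdetA := det_eq_one_of_mem_wordMatrices hA
  have hdetB := det_eq_one_of_mem_wordMatrices hB
  refine Set.mul_subset_mul (fun C hC ↦ mem_wordMatrices_of_isConj hC hA)
    (fun C hC ↦ mem_wordMatrices_of_isConj hC hB)
    (diagonal_mem_conjugatesOf_mul hAc hBc (by simp [hdetB]) ha ha0 ?_)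
  rw [hdetA, hdetB, mul_one, mul_inv_cancel₀ ha0]

lemma exists_ne_inv_notMem {s : Set F} (hs : s.Finite) : ∃ a, a ≠ a⁻¹ ∧ a ∉ s ∧ a⁻¹ ∉ s := by
  obtain ⟨a, ha⟩ := (((Set.toFinite {-1, 0, 1}).union hs).union hs.inv).exists_notMem
  simp only [Set.mem_union, Set.mem_inv, not_or] at ha
  exact ⟨a, mt self_eq_inv₀.1 ha.1.1, ha.1.2, ha.2⟩

lemma exists_injective_diagonal_mem_wordMatrices_mul (hw : w ≠ 1) (hw' : w' ≠ 1) (n : ℕ) :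
    ∃ β : Fin n → F, Function.Injective β ∧
      diagonal β ∈ wordMatrices w (Fin n) F * wordMatrices w' (Fin n) F := by
  have base (k : ℕ) [Subsingleton (Fin k)] : ∃ β : Fin k → F, Function.Injective β ∧
      diagonal β ∈ wordMatrices w (Fin k) F * wordMatrices w' (Fin k) F := by
    refine ⟨fun _ ↦ 1, Function.injective_of_subsingleton _, ?_⟩
    rw [diagonal_one]
    exact one_mem_wordMatrices_mul
  induction n using Nat.twoStepInduction with
  | zero => exact base _
  | one => exact base _
  | more n ih =>
    obtain ⟨β, hβ, hmem⟩ := ih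
    obtain ⟨a, ha, haβ, haβ'⟩ := exists_ne_inv_notMem (Set.finite_range β)
    let e : Fin 2 ⊕ Fin n ≃ Fin (n + 2) := finSumFinEquiv.trans (finCongr (add_comm 2 n))
    refine ⟨Sum.elim ![a, a⁻¹] β ∘ e.symm, Function.Injective.comp ?_ e.symm.injective, ?_⟩
    · refine Function.Injective.sumElim ?_ hβ ?_
      · simpa [Fin.forall_fin_two, Function.Injective, eq_comm] using ha
      · simp_all [Fin.forall_fin_two, eq_comm]
    · have := reindex_mem_wordMatrices_mul e
        (fromBlocks_mem_wordMatrices_mul (diagonal_inv_mem_wordMatrices_mul hw hw' ha) hmem)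
      simpa [fromBlocks_diagonal] using this

lemma exists_injective_conjugatesOf_subset (hw : w ≠ 1) (hw' : w' ≠ 1) (n : ℕ) :
    ∃ β : Fin n → F, Function.Injective β ∧ ∏ i, β i = 1 ∧
      conjugatesOf (diagonal β) ⊆ wordMatrices w (Fin n) F * wordMatrices w' (Fin n) F := by
  obtain ⟨β, hβ, hmem⟩ := exists_injective_diagonal_mem_wordMatrices_mul (F := F) hw hw' n
  refine ⟨β, hβ, ?_, fun A hA ↦ mem_wordMatrices_mul_of_isConj hA hmem⟩
  obtain ⟨A, hA, B, hB, hAB⟩ := Set.mem_mul.1 hmem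
  rw [← det_diagonal, ← hAB, det_mul, det_eq_one_of_mem_wordMatrices hA,
    det_eq_one_of_mem_wordMatrices hB, mul_one]

end RegularDiagonal

section BlockConjugation

variable {m n R : Type*} [Fintype m] [DecidableEq m] [Fintype n] [DecidableEq n] [CommRing R]

lemma isConj_transpose {A B : Matrix n n R} (h : IsConj A B) : IsConj Aᵀ Bᵀ := by
  obtain ⟨u, hu⟩ := h.symm
  refine ⟨((isUnit_transpose _).2 u.isUnit).unit, ?_⟩
  have := congrArg transpose hu.eq
  rw [transpose_mul, transpose_mul] at this
  exact this.symm

lemma isConj_fromBlocks_upper (A : Matrix m m R) (r : Matrix m n R) (c : Matrix n m R)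
    (B : Matrix n n R) (ψ : Matrix m n R) :
    IsConj (fromBlocks A r c B)
      (fromBlocks (A + ψ * c) (r + ψ * B - (A + ψ * c) * ψ) c (B - c * ψ)) := by
  refine ⟨⟨fromBlocks 1 ψ 0 1, fromBlocks 1 (-ψ) 0 1, ?_, ?_⟩, ?_⟩
  · simp [fromBlocks_multiply]
  · simp [fromBlocks_multiply]
  · simp [SemiconjBy, fromBlocks_multiply]

lemma isConj_fromBlocks_diag {A A' : Matrix m m R} {B B' : Matrix n n R}
    (hA : IsConj A A') (hB : IsConj B B') (C : Matrix n m R) :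
    ∃ C', IsConj (fromBlocks A 0 C B) (fromBlocks A' 0 C' B') := by
  obtain ⟨u, hu⟩ := hA
  obtain ⟨v, hv⟩ := hB
  refine ⟨v.1 * C * (u⁻¹).1, ⟨fromBlocks u 0 0 v, fromBlocks (u⁻¹).1 0 0 (v⁻¹).1, ?_, ?_⟩, ?_⟩
  · simp [fromBlocks_multiply]
  · simp [fromBlocks_multiply]
  · simp [SemiconjBy, fromBlocks_multiply, hu.eq, hv.eq]

variable {F : Type*} [Field F] {α : m → F} {β : n → F}

lemma isConj_diagonal_fromBlocks_diagonal (hαβ : ∀ i j, α i ≠ β j) (C : Matrix n m F) :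
    IsConj (fromBlocks (diagonal α) 0 0 (diagonal β))
      (fromBlocks (diagonal α) 0 C (diagonal β)) := by
  let Z : Matrix n m F := of fun i j ↦ C i j / (α j - β i)
  have hZ : Z * diagonal α = C + diagonal β * Z := by
    ext i j
    have := sub_ne_zero.2 (hαβ j i)
    simp only [Z, Matrix.add_apply, mul_diagonal, diagonal_mul, of_apply]
    field_simp
    ring
  refine ⟨⟨fromBlocks 1 0 Z 1, fromBlocks 1 0 (-Z) 1, ?_, ?_⟩, ?_⟩
  · simp [fromBlocks_multiply]
  · simp [fromBlocks_multiply]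
  · simp [SemiconjBy, fromBlocks_multiply, hZ, -fromBlocks_diagonal]

lemma isConj_diagonal_fromBlocks_zero₁₂ (hαβ : ∀ i j, α i ≠ β j) {A : Matrix m m F}
    {B : Matrix n n F} (hA : IsConj (diagonal α) A) (hB : IsConj (diagonal β) B)
    (C : Matrix n m F) : IsConj (diagonal (Sum.elim α β)) (fromBlocks A 0 C B) := by
  obtain ⟨C', hC'⟩ := isConj_fromBlocks_diag hA.symm hB.symm C
  rw [← fromBlocks_diagonal]
  exact (isConj_diagonal_fromBlocks_diagonal hαβ C').trans hC'.symm

lemma isConj_diagonal_fromBlocks_zero₂₁ (hαβ : ∀ i j, α i ≠ β j) {A : Matrix m m F}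
    {B : Matrix n n F} (hA : IsConj (diagonal α) A) (hB : IsConj (diagonal β) B)
    (C : Matrix m n F) : IsConj (diagonal (Sum.elim α β)) (fromBlocks A C 0 B) := by
  have hA' := isConj_transpose hA
  have hB' := isConj_transpose hB
  rw [diagonal_transpose] at hA' hB'
  simpa [fromBlocks_transpose] using
    isConj_transpose (isConj_diagonal_fromBlocks_zero₁₂ hαβ hA' hB' Cᵀ)

end BlockConjugation

section Sourour

variable {F : Type*} [Field F] {n : Type*} [Fintype n]

lemma fromBlocks_smul_one_eq_mul {b g : F} (hb : b ≠ 0) (hg : g ≠ 0) (r : Matrix Unit n F)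
    (c : Matrix n Unit F) {B X Y : Matrix n n F} (hXY : X * Y = B - (b * g)⁻¹ • (c * r)) :
    fromBlocks ((b * g) • 1) r c B =
      fromBlocks (b • 1) 0 (g⁻¹ • c) X * fromBlocks (g • 1) (b⁻¹ • r) 0 Y := by
  rw [fromBlocks_multiply]
  simp [hXY, smul_smul, hb, hg, mul_comm]

lemma exists_row_mul_eq {c : Matrix n Unit F} {i : n} (hi : c i () ≠ 0) (d : Matrix Unit Unit F) :
    ∃ ψ : Matrix Unit n F, ψ * c = d := by
  classical
  refine ⟨of fun _ ↦ Pi.single i (d () () / c i ()), ?_⟩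
  ext
  simp [Matrix.mul_apply, Pi.single_apply, hi]

lemma exists_row_mul_eq_zero [Nontrivial n] {c : Matrix n Unit F} {i : n}
    (hi : c i () ≠ 0) : ∃ ψ : Matrix Unit n F, ψ * c = 0 ∧ ∃ j, i ≠ j ∧ (c * ψ) i j ≠ 0 := by
  classical
  obtain ⟨j, hij⟩ := exists_ne i
  refine ⟨of fun _ ↦ Pi.single j (c i ()) - Pi.single i (c j ()), ?_, j, hij.symm, ?_⟩
  · ext
    simp [Matrix.mul_apply, Pi.single_apply, mul_sub, Finset.sum_sub_distrib, mul_comm]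
  · simp [Matrix.mul_apply, hij, hi]

variable [DecidableEq n]

lemma exists_isUnit_mulVec_single_eq {v : n → F} (hv : v ≠ 0) (i : n) :
    ∃ P : Matrix n n F, IsUnit P ∧ P *ᵥ Pi.single i 1 = v := by
  have hi : (Pi.single i 1 : n → F) ≠ 0 := by simp
  obtain ⟨g, hg⟩ := Submodule.exists_linearEquiv_restrict_eq
    ((LinearEquiv.toSpanNonzeroSingleton F _ _ hi).symm ≪≫ₗ
      LinearEquiv.toSpanNonzeroSingleton F _ _ hv)
  have hsymm : (LinearEquiv.toSpanNonzeroSingleton F _ _ hi).symm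
      ⟨_, Submodule.mem_span_singleton_self _⟩ = 1 := LinearEquiv.coord_self F _ _ hi
  refine ⟨LinearMap.toMatrix' g.toLinearMap,
    ((Module.End.isUnit_iff _).2 g.bijective).map LinearMap.toMatrixAlgEquiv', ?_⟩
  rw [LinearMap.toMatrix'_mulVec]
  simpa [hsymm] using (hg ⟨_, Submodule.mem_span_singleton_self _⟩).symm

lemma exists_isConj_fromBlocks_apply_ne_zero {A : Matrix (Unit ⊕ n) (Unit ⊕ n) F}
    (hA : A ∉ Set.center (Matrix (Unit ⊕ n) (Unit ⊕ n) F)) :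
    ∃ a r c B, IsConj A (fromBlocks a r c B) ∧ ∃ i, c i () ≠ 0 := by
  obtain ⟨v, hv⟩ := exists_linearIndependent_mulVec hA
  obtain ⟨P, ⟨u, rfl⟩, hP⟩ := exists_isUnit_mulVec_single_eq (hv.ne_zero 0) (Sum.inl ())
  let A' := (u⁻¹).1 * A * u.1
  have hA' : u.1 * A' = A * u.1 := by simp [A', mul_assoc]
  refine ⟨A'.toBlocks₁₁, A'.toBlocks₁₂, A'.toBlocks₂₁, A'.toBlocks₂₂, ?_, ?_⟩
  · rw [fromBlocks_toBlocks]
    exact IsConj.symm ⟨u, hA'⟩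
  by_contra! hc
  let a := A' (Sum.inl ()) (Sum.inl ())
  have hcol : A' *ᵥ Pi.single (Sum.inl ()) 1 = a • Pi.single (Sum.inl ()) 1 := by
    ext (i | i)
    · simp [a]
    · have hi : A' (Sum.inr i) (Sum.inl ()) = 0 := hc i
      simp [hi]
  refine (LinearIndependent.pair_iff' (hv.ne_zero 0)).1 hv a ?_
  calc a • v = u.1 *ᵥ (A' *ᵥ Pi.single (Sum.inl ()) 1) := by
        rw [hcol, mulVec_smul, hP]
        rfl
    _ = A *ᵥ v := by rw [mulVec_mulVec, hA', ← mulVec_mulVec, hP]; rfl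

lemma det_fromBlocks_smul_one {a : F} (ha : a ≠ 0) (r : Matrix Unit n F)
    (c : Matrix n Unit F) (B : Matrix n n F) :
    (fromBlocks (a • 1) r c B).det = a * (B - a⁻¹ • (c * r)).det := by
  have h := fromBlocks_smul_one_eq_mul ha one_ne_zero r c (B := B)
    (X := B - a⁻¹ • (c * r)) (Y := 1) (by simp)
  rw [mul_one] at h
  rw [h, det_mul, det_fromBlocks_zero₁₂, det_fromBlocks_zero₂₁]
  simp

lemma schur_complement_conj_eq {a l : F} (ha : a ≠ 0) {r ψ : Matrix Unit n F}
    {c : Matrix n Unit F} {B : Matrix n n F} (hψ : ψ * c = 0)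
    (hB : B - a⁻¹ • (c * r) = l • 1) :
    B - c * ψ - a⁻¹ • (c * (r + ψ * B - a • (1 : Matrix Unit Unit F) * ψ)) =
      l • 1 - (a⁻¹ * l) • (c * ψ) := by
  have hψB : ψ * B = l • ψ := by
    rw [sub_eq_iff_eq_add.1 hB, Matrix.mul_add, Matrix.mul_smul, Matrix.mul_smul,
      ← Matrix.mul_assoc, hψ]
    simp
  rw [hψB, ← hB]
  simp only [Matrix.mul_add, Matrix.mul_sub, Matrix.mul_smul, Matrix.smul_mul, Matrix.one_mul,
    smul_add, smul_sub, smul_smul, inv_mul_cancel₀ ha, one_smul]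
  abel

lemma exists_isConj_fromBlocks_smul_one {A : Matrix (Unit ⊕ n) (Unit ⊕ n) F}
    (hA : A ∉ Set.center (Matrix (Unit ⊕ n) (Unit ⊕ n) F)) (a : F) :
    ∃ r c B, IsConj A (fromBlocks (a • 1) r c B) ∧ ∃ i, c i () ≠ 0 := by
  obtain ⟨a', r, c, B, h, i, hi⟩ := exists_isConj_fromBlocks_apply_ne_zero hA
  obtain ⟨ψ, hψ⟩ := exists_row_mul_eq hi (a • 1 - a')
  have h' := h.trans (isConj_fromBlocks_upper a' r c B ψ)
  rw [hψ, add_sub_cancel] at h'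
  exact ⟨_, _, _, h', i, hi⟩

lemma exists_isConj_fromBlocks_schur_notMem_center [Nontrivial n]
    {A : Matrix (Unit ⊕ n) (Unit ⊕ n) F} (hA : A ∉ Set.center (Matrix (Unit ⊕ n) (Unit ⊕ n) F))
    (hdet : A.det ≠ 0) {a : F} (ha : a ≠ 0) :
    ∃ r c B, IsConj A (fromBlocks (a • 1) r c B) ∧
      B - a⁻¹ • (c * r) ∉ Set.center (Matrix n n F) := by
  obtain ⟨r, c, B, h, i, hi⟩ := exists_isConj_fromBlocks_smul_one hA a
  by_cases hB : B - a⁻¹ • (c * r) ∉ Set.center (Matrix n n F)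
  · exact ⟨r, c, B, h, hB⟩
  rw [not_not, center_eq_range] at hB
  obtain ⟨l, hl⟩ := hB
  rw [scalar_apply, ← smul_one_eq_diagonal] at hl
  have hl0 : l ≠ 0 := by
    rintro rfl
    rw [det_eq_of_isConj h, det_fromBlocks_smul_one ha, ← hl] at hdet
    simp at hdet
  -- As `ψ * c = 0`, conjugating by `ψ` keeps the corner and changes the scalar Schur complement by
  -- a nonzero multiple of `c * ψ`.
  obtain ⟨ψ, hψ, j, hij, hj⟩ := exists_row_mul_eq_zero hi
  have h' := h.trans (isConj_fromBlocks_upper (a • 1) r c B ψ)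
  rw [hψ, add_zero] at h'
  refine ⟨_, _, _, h', notMem_center_of_apply_ne_zero hij ?_⟩
  rw [schur_complement_conj_eq ha hψ hl.symm]
  simp [hij, ha, hl0, hj]

lemma exists_isConj_fromBlocks_schur {A : Matrix (Unit ⊕ n) (Unit ⊕ n) F}
    (hA : A ∉ Set.center (Matrix (Unit ⊕ n) (Unit ⊕ n) F)) (hdet : A.det ≠ 0) {a : F}
    (ha : a ≠ 0) :
    ∃ r c B, IsConj A (fromBlocks (a • 1) r c B) ∧
      (Nontrivial n → B - a⁻¹ • (c * r) ∉ Set.center (Matrix n n F)) := by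
  cases subsingleton_or_nontrivial n
  · obtain ⟨r, c, B, h, -⟩ := exists_isConj_fromBlocks_smul_one hA a
    exact ⟨r, c, B, h, fun hn ↦ absurd hn (not_nontrivial n)⟩
  · obtain ⟨r, c, B, h, hB⟩ := exists_isConj_fromBlocks_schur_notMem_center hA hdet ha
    exact ⟨r, c, B, h, fun _ ↦ hB⟩

variable (F n) in
/-- Sourour's factorization property: an invertible matrix which is not scalar (or is `1 × 1`) is
a product of two matrices conjugate to prescribed diagonal matrices with distinct entries, as soon
as the determinants allow it. -/
def HasSourourFactorization : Prop :=
  ∀ ⦃A : Matrix n n F⦄ ⦃β γ : n → F⦄, (Nontrivial n → A ∉ Set.center (Matrix n n F)) →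
    A.det ≠ 0 → Function.Injective β → Function.Injective γ → A.det = (∏ i, β i) * ∏ i, γ i →
    A ∈ conjugatesOf (diagonal β) * conjugatesOf (diagonal γ)

lemma hasSourourFactorization_of_subsingleton [Subsingleton n] :
    HasSourourFactorization F n := by
  rintro A β γ - - - - hdet
  refine Set.mem_mul.2 ⟨_, mem_conjugatesOf_self, _, mem_conjugatesOf_self, ?_⟩
  cases isEmpty_or_nonempty n
  · exact Subsingleton.elim _ _
  obtain ⟨i⟩ := ‹Nonempty n›
  have := uniqueOfSubsingleton i
  ext j k
  rw [Subsingleton.elim j default, Subsingleton.elim k default]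
  simpa using hdet.symm

lemma HasSourourFactorization.reindex {m : Type*} [Fintype m] [DecidableEq m]
    (h : HasSourourFactorization F m) (e : m ≃ n) : HasSourourFactorization F n := by
  intro A β γ hA hdet0 hβ hγ hdet
  have hmap (δ : n → F) : reindexAlgEquiv F F e (diagonal (δ ∘ e)) = diagonal δ := by
    simp [Function.comp_assoc]
  obtain ⟨B, rfl⟩ := (reindexAlgEquiv F F e).surjective A
  rw [det_reindexAlgEquiv] at hdet0 hdet
  have hB : B ∈ conjugatesOf (diagonal (β ∘ e)) * conjugatesOf (diagonal (γ ∘ e)) := by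
    refine h (fun hm hB ↦ hA e.symm.nontrivial ?_) hdet0 (hβ.comp e.injective)
      (hγ.comp e.injective) ?_
    · exact (MulEquivClass.apply_mem_center_iff (reindexAlgEquiv F F e)).2 hB
    · simpa [e.prod_comp] using hdet
  have := map_mem_conjugatesOf_mul
    (reindexAlgEquiv F F e : Matrix m m F →* Matrix n n F) hB
  simpa only [MonoidHom.coe_coe, hmap] using this

lemma HasSourourFactorization.unit_sum [Nonempty n] (hn : HasSourourFactorization F n) :
    HasSourourFactorization F (Unit ⊕ n) := by
  intro A β γ hA hdet0 hβ hγ hdet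
  replace hdet : A.det = β (Sum.inl ()) * γ (Sum.inl ()) *
      ((∏ i, (β ∘ Sum.inr) i) * ∏ i, (γ ∘ Sum.inr) i) := by
    simpa [mul_mul_mul_comm] using hdet
  have hnontrivial : Nontrivial (Unit ⊕ n) :=
    ⟨_, Sum.inr (Classical.arbitrary n), Sum.inl_ne_inr (a := ())⟩
  have hbg : β (Sum.inl ()) * γ (Sum.inl ()) ≠ 0 := left_ne_zero_of_mul (hdet ▸ hdet0)
  obtain ⟨r, c, B, h, hS⟩ := exists_isConj_fromBlocks_schur (hA hnontrivial) hdet0 hbg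
  have hdetA := (det_eq_of_isConj h).trans (det_fromBlocks_smul_one hbg r c B)
  obtain ⟨X, hX, Y, hY, hXY⟩ := Set.mem_mul.1 <| hn hS
    (right_ne_zero_of_mul (hdetA ▸ hdet0)) (hβ.comp Sum.inr_injective)
    (hγ.comp Sum.inr_injective) (mul_left_cancel₀ hbg (hdetA.symm.trans hdet))
  refine mem_conjugatesOf_mul_of_isConj h.symm ?_
  have hdiag (δ : Unit ⊕ n → F) :
      IsConj (diagonal (δ ∘ Sum.inl)) (δ (Sum.inl ()) • (1 : Matrix Unit Unit F)) := by
    rw [smul_one_eq_diagonal]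
    exact IsConj.refl _
  have hne {δ : Unit ⊕ n → F} (hδ : Function.Injective δ) (i : Unit) (j : n) :
      (δ ∘ Sum.inl) i ≠ (δ ∘ Sum.inr) j := hδ.ne Sum.inl_ne_inr
  rw [fromBlocks_smul_one_eq_mul (left_ne_zero_of_mul hbg) (right_ne_zero_of_mul hbg) r c hXY,
    ← Sum.elim_comp_inl_inr β, ← Sum.elim_comp_inl_inr γ]
  exact Set.mul_mem_mul (isConj_diagonal_fromBlocks_zero₁₂ (hne hβ) (hdiag β) hX _)
    (isConj_diagonal_fromBlocks_zero₂₁ (hne hγ) (hdiag γ) hY _)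

lemma hasSourourFactorization_fin : ∀ n : ℕ, HasSourourFactorization F (Fin n)
  | 0 | 1 => hasSourourFactorization_of_subsingleton
  | n + 2 => (hasSourourFactorization_fin (n + 1)).unit_sum.reindex
      (((Equiv.sumComm _ _).trans (.sumCongr (.refl _) finOneEquiv.symm)).trans finSumFinEquiv)

end Sourour

/-- If `F` is an infinite field, `n ≥ 2`, and `w₁, w₂, w₃, w₄` are nontrivial words, then every
noncentral element of `SL_n(F)` is in `w₁(SL_n(F)) · w₂(SL_n(F)) · w₃(SL_n(F)) · w₄(SL_n(F))`. -/
theorem sl_waring_four_noncentral {F : Type*} [Field F] [Infinite F]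
    (n : ℕ) (hn : 2 ≤ n) {d₁ d₂ d₃ d₄ : ℕ}
    (w₁ : FreeGroup (Fin d₁)) (w₂ : FreeGroup (Fin d₂))
    (w₃ : FreeGroup (Fin d₃)) (w₄ : FreeGroup (Fin d₄))
    (hw₁ : w₁ ≠ 1) (hw₂ : w₂ ≠ 1) (hw₃ : w₃ ≠ 1) (hw₄ : w₄ ≠ 1) :
    ∀ g : Matrix.SpecialLinearGroup (Fin n) F,
      g ∉ Subgroup.center (Matrix.SpecialLinearGroup (Fin n) F) →
      ∃ g₁ ∈ wordValues w₁ (Matrix.SpecialLinearGroup (Fin n) F),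
        ∃ g₂ ∈ wordValues w₂ (Matrix.SpecialLinearGroup (Fin n) F),
          ∃ g₃ ∈ wordValues w₃ (Matrix.SpecialLinearGroup (Fin n) F),
            ∃ g₄ ∈ wordValues w₄ (Matrix.SpecialLinearGroup (Fin n) F),
              g = g₁ * g₂ * g₃ * g₄ := by
  intro g hg
  obtain ⟨β, hβ, hβ1, hβw⟩ := exists_injective_conjugatesOf_subset (F := F) hw₁ hw₂ n
  obtain ⟨γ, hγ, hγ1, hγw⟩ := exists_injective_conjugatesOf_subset (F := F) hw₃ hw₄ n
  have hfactor : g.1 ∈ conjugatesOf (diagonal β) * conjugatesOf (diagonal γ) :=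
    hasSourourFactorization_fin n (fun _ ↦ notMem_center_coe hg) (by simp [g.2]) hβ hγ
      (by simp [g.2, hβ1, hγ1])
  obtain ⟨_, ⟨_, ⟨g₁, h₁, rfl⟩, _, ⟨g₂, h₂, rfl⟩, rfl⟩, _,
    ⟨_, ⟨g₃, h₃, rfl⟩, _, ⟨g₄, h₄, rfl⟩, rfl⟩, hprod⟩ := Set.mul_subset_mul hβw hγw hfactor
  refine ⟨g₁, h₁, g₂, h₂, g₃, h₃, g₄, h₄, Subtype.ext ?_⟩
  rw [mul_assoc]
  exact hprod.symm
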